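/- arXiv:2109.12616 — 4 statements merged into one kernel-verified Lean document; each statement's English description precedes it below -/
import Mathlib

section
/- Suppose vote : Fin n → Option Bool satisfies the round-1 justification condition: for every replica i and every b : Bool, vote i = some b implies |{j ∈ R i : state j = b}| ≥ ⌊n/2⌋ + 1. Then all non-? votes agree: for all replicas i and i' and booleans b and b', if vote i = some b and vote i' = some b', then b = b'. (In any phase of Weak-MVC there is at most one non-? value among all votes.) -/
theorem votes_agree
    (n : ℕ) (state : Fin n → Bool) (R : Fin n → Finset (Fin n))
    (vote : Fin n → Option Bool)
    (hjust : ∀ i : Fin n, ∀ b : Bool, vote i = some b →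
      ((R i).filter (fun j => state j = b)).card ≥ n / 2 + 1) :
    ∀ i i' : Fin n, ∀ b b' : Bool,
      vote i = some b → vote i' = some b' → b = b' := by
  intro i i' b b' h h'
  by_contra hne
  have h1 := hjust i b h
  have h2 := hjust i' b' h'
  have hd : Disjoint ((R i).filter (fun j => state j = b))
      ((R i').filter (fun j => state j = b')) := by
    rw [Finset.disjoint_left]
    intro j hj hj'
    exact hne ((Finset.mem_filter.mp hj).2.symm.trans (Finset.mem_filter.mp hj').2)
  have h3 := Finset.card_le_univ
    ((R i).filter (fun j => state j = b) ∪ (R i').filter (fun j => state j = b'))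
  rw [Finset.card_union_of_disjoint hd, Fintype.card_fin] at h3
  omega
end

section
/- (Invariant 1 of the safety proof: any two decisions within a phase must be on the same value.) Suppose vote : Fin n → Option Bool satisfies the round-1 justification condition: for every replica j and every b : Bool, vote j = some b implies |{k ∈ R j : state k = b}| ≥ ⌊n/2⌋ + 1. If replica i decides b (that is, |{j ∈ R' i : vote j = some b}| ≥ f + 1) and replica i' decides b' (that is, |{j ∈ R' i' : vote j = some b'}| ≥ f + 1), then b = b'. -/
theorem decisions_agree_within_phase
    (n f : ℕ) (state : Fin n → Bool)
    (R R' : Fin n → Finset (Fin n))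
    (vote : Fin n → Option Bool)
    (hjust : ∀ j : Fin n, ∀ b : Bool, vote j = some b →
      ((R j).filter (fun k => state k = b)).card ≥ n / 2 + 1)
    (i i' : Fin n) (b b' : Bool)
    (hdec : ((R' i).filter (fun j => vote j = some b)).card ≥ f + 1)
    (hdec' : ((R' i').filter (fun j => vote j = some b')).card ≥ f + 1) :
    b = b' := by
  obtain ⟨j, hj⟩ := Finset.card_pos.mp (by omega :
    0 < ((R' i).filter (fun j => vote j = some b)).card)
  obtain ⟨j', hj'⟩ := Finset.card_pos.mp (by omega :
    0 < ((R' i').filter (fun j => vote j = some b')).card)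
  have h1 := hjust j b (Finset.mem_filter.mp hj).2
  have h2 := hjust j' b' (Finset.mem_filter.mp hj').2
  by_contra hne
  have hd : Disjoint ((R j).filter (fun k => state k = b))
      ((R j').filter (fun k => state k = b')) := by
    rw [Finset.disjoint_left]
    intro k hk hk'
    exact hne ((Finset.mem_filter.mp hk).2.symm.trans (Finset.mem_filter.mp hk').2)
  have h3 := Finset.card_union_of_disjoint hd
  have h4 := Finset.card_le_univ ((R j).filter (fun k => state k = b) ∪
      (R j').filter (fun k => state k = b'))
  rw [h3, Fintype.card_fin] at h4
  omega
end

section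
/- (Invariant 2 of the safety proof: once a replica decides on a value b, the next phase is value-locked on b.) Suppose vote : Fin n → Option Bool satisfies the round-1 justification condition: for every replica j and every c : Bool, vote j = some c implies |{k ∈ R j : state k = c}| ≥ ⌊n/2⌋ + 1. If some replica i decides b (that is, |{j ∈ R' i : vote j = some b}| ≥ f + 1), then: (a) at least f + 1 replicas j ∈ Fin n have vote j = some b; (b) every replica i' receives at least one vote equal to some b, i.e., there exists j ∈ R' i' with vote j = some b; and (c) every non-none vote equals some b, i.e., for all j and b', vote j = some b' implies b' = b. Consequently every replica that does not decide in this phase sets its next-phase state to b. -/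
theorem decision_value_locks_next_phase
    (n f : ℕ) (state : Fin n → Bool)
    (R R' : Fin n → Finset (Fin n))
    (vote : Fin n → Option Bool)
    (hR' : ∀ i : Fin n, (R' i).card ≥ n - f)
    (hjust : ∀ j : Fin n, ∀ c : Bool, vote j = some c →
      ((R j).filter (fun k => state k = c)).card ≥ n / 2 + 1)
    (i : Fin n) (b : Bool)
    (hdec : ((R' i).filter (fun j => vote j = some b)).card ≥ f + 1) :
    ((Finset.univ.filter (fun j : Fin n => vote j = some b)).card ≥ f + 1)
    ∧ (∀ i' : Fin n, ∃ j ∈ R' i', vote j = some b)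
    ∧ (∀ j : Fin n, ∀ b' : Bool, vote j = some b' → b' = b) := by
  classical
  have ha : (Finset.univ.filter (fun j : Fin n => vote j = some b)).card ≥ f + 1 :=
    le_trans hdec (Finset.card_le_card (Finset.filter_subset_filter _ (Finset.subset_univ _)))
  -- two disjoint sets of replicas have total size at most `n`
  have hdisj : ∀ A B : Finset (Fin n), Disjoint A B → A.card + B.card ≤ n := by
    intro A B h
    rw [← Finset.card_union_of_disjoint h]
    simpa using Finset.card_le_univ (A ∪ B)
  refine ⟨ha, ?_, ?_⟩
  · intro i'
    by_contra hno
    have h := hdisj (R' i') (Finset.univ.filter (fun j : Fin n => vote j = some b)) (by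
      rw [Finset.disjoint_left]
      intro j hj hj2
      exact hno ⟨j, hj, (Finset.mem_filter.mp hj2).2⟩)
    have := hR' i'
    omega
  · intro j b' hj
    by_contra hne
    have hpos : 0 < (Finset.univ.filter (fun j : Fin n => vote j = some b)).card := by omega
    obtain ⟨k, hk⟩ := Finset.card_pos.mp hpos
    have h1 := hjust k b (Finset.mem_filter.mp hk).2
    have h2 := hjust j b' hj
    have h := hdisj ((R k).filter (fun x => state x = b)) ((R j).filter (fun x => state x = b')) (by
      rw [Finset.disjoint_left]
      intro x hx hx2
      exact hne ((Finset.mem_filter.mp hx2).2.symm.trans (Finset.mem_filter.mp hx).2))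
    omega
end

section
/- (Theorem: Weak-MVC has average round complexity at most 5.) The expected number of communication rounds satisfies E[2·T + 1] = ∫ (2 · T ω + 1) dμ(ω) ≤ 5. -/
open MeasureTheory ENNReal

theorem weakmvc_average_round_complexity
    {Ω : Type*} [MeasurableSpace Ω] (μ : Measure Ω) [IsProbabilityMeasure μ]
    (T : Ω → ℕ) (hT : Measurable T)
    (htail : ∀ t : ℕ, μ {ω | T ω > t} ≤ (1 / 2) ^ t) :
    ∫⁻ ω, (2 * (T ω : ℝ≥0∞) + 1) ∂μ ≤ 5 := by
  have hm : ∀ t : ℕ, MeasurableSet {ω | T ω > t} := fun t => hT measurableSet_Ioi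
  have hpt : ∀ ω, (T ω : ℝ≥0∞) =
      ∑' t : ℕ, ({ω | T ω > t} : Set Ω).indicator (fun _ => (1 : ℝ≥0∞)) ω := by
    intro ω
    rw [tsum_eq_sum (s := Finset.range (T ω))]
    · rw [Finset.sum_congr rfl (g := fun _ => (1 : ℝ≥0∞))]
      · simp
      · intro t ht
        simpa [Set.indicator_apply] using ht
    · intro t ht
      simpa [Set.indicator_apply] using ht
  have hE : ∫⁻ ω, (T ω : ℝ≥0∞) ∂μ ≤ 2 := by
    simp_rw [hpt]
    rw [lintegral_tsum (fun t => (measurable_const.indicator (hm t)).aemeasurable)]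
    calc _ = ∑' t : ℕ, μ {ω | T ω > t} := by
          refine tsum_congr fun t => ?_
          rw [lintegral_indicator (hm t)]
          simp
      _ ≤ ∑' t : ℕ, (1 / 2 : ℝ≥0∞) ^ t := ENNReal.tsum_le_tsum htail
      _ = 2 := by
          rw [ENNReal.tsum_geometric, one_div, ENNReal.one_sub_inv_two, inv_inv]
  have hTm : Measurable fun ω => (T ω : ℝ≥0∞) := measurable_from_top.comp hT
  rw [lintegral_add_right _ measurable_const, lintegral_const_mul _ hTm]
  calc _ ≤ 2 * (2 : ℝ≥0∞) + 1 := by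
        simp only [lintegral_const, measure_univ, mul_one]
        gcongr
    _ = 5 := by norm_num
end
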